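/- arXiv:2211.05210 — 3 statements merged into one kernel-verified Lean document; each statement's English description precedes it below -/
import Mathlib

section
/- Let X have the exponential distribution with parameter 1 and let t ≥ 0. If 1 ≤ q ≤ p ≤ 2q, then ‖X − t‖_p/‖X − t‖_q ≤ (p/q)·max((1 − e^{−t})^{−1/(2q)}, e^{t/(2q)}). -/
open MeasureTheory

/-- `‖X - t‖ₛ` for `X` exponential with parameter 1:
`(∫_0^∞ e^{-x} |x - t|^s dx)^{1/s}`. -/
noncomputable def expShiftNorm (s t : ℝ) : ℝ :=
  (∫ x in Set.Ioi (0 : ℝ), Real.exp (-x) * |x - t| ^ s) ^ (1 / s)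

/-!
Split `E|X - t|ˢ` at `t` into `E[(t - X)ˢ; X ≤ t]` and, by lack of memory, `e⁻ᵗ Γ(s + 1)`. With
`p = q r`, each part of the `p`-th moment has the form `∫ w gʳ` (the Gamma integral after rescaling
by `r`), and `∫ w gʳ ≤ (sup g)ʳ⁻¹ ∫ w g`. What remains is to bound `sup g` by `∫ w g`; in both
parts the tangent line of the convex function `x ↦ x ^ q` does this, taken at `q` for the Gamma
integral and at the midpoint `t / 2` on `[0, t]`. The two parts are recombined by superadditivity
of `x ↦ x ^ r`.
-/

open Set

/-! ### Elementary inequalities -/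

theorem rpow_add_mul_rpow_sub_one_mul_sub_le_rpow {c y q : ℝ} (hc : 0 < c) (hy : 0 ≤ y)
    (hq : 1 ≤ q) : c ^ q + q * c ^ (q - 1) * (y - c) ≤ y ^ q := by
  have bernoulli : 1 + q * (y / c - 1) ≤ y ^ q / c ^ q := by
    have := one_add_mul_self_le_rpow_one_add (s := y / c - 1)
      (by linarith [div_nonneg hy hc.le]) hq
    rwa [add_sub_cancel, Real.div_rpow hy hc.le] at this
  calc c ^ q + q * c ^ (q - 1) * (y - c) = (1 + q * (y / c - 1)) * c ^ q := by
        rw [Real.rpow_sub_one hc.ne']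
        field_simp
    _ ≤ y ^ q := (le_div_iff₀ (by positivity)).mp bernoulli

theorem two_rpow_sub_one_le_rpow_self {r : ℝ} (hr : 1 ≤ r) : (2 : ℝ) ^ (r - 1) ≤ r ^ r := by
  have hr0 : 0 < r := by linarith
  rw [Real.rpow_def_of_pos two_pos, Real.rpow_def_of_pos hr0, Real.exp_le_exp]
  calc Real.log 2 * (r - 1) ≤ 1 * (r - 1) := by
        have : Real.log 2 ≤ 1 := by linarith [Real.log_le_sub_one_of_pos two_pos]
        gcongr
    _ ≤ Real.log r * r := by linarith [Real.self_sub_one_le_mul_log hr0.le]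

theorem exp_neg_mul_rpow_le {q y : ℝ} (hq : 0 < q) (hy : 0 ≤ y) :
    Real.exp (-y) * y ^ q ≤ Real.exp (-q) * q ^ q := by
  have hdiv : y / q ≤ Real.exp (y / q - 1) := by linarith [Real.add_one_le_exp (y / q - 1)]
  calc Real.exp (-y) * y ^ q = Real.exp (-y) * ((y / q) ^ q * q ^ q) := by
        rw [← Real.mul_rpow (by positivity) hq.le, div_mul_cancel₀ y hq.ne']
    _ ≤ Real.exp (-y) * (Real.exp (y / q - 1) ^ q * q ^ q) := by gcongr
    _ = Real.exp (-q) * q ^ q := by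
        rw [← Real.exp_mul, ← mul_assoc, ← Real.exp_add]
        congr 2
        field_simp
        ring

theorem max_one_sub_exp_neg_rpow_neg_exp_mul_mono {c d t : ℝ} (hcd : c ≤ d) (ht : 0 ≤ t) :
    max ((1 - Real.exp (-t)) ^ (-c)) (Real.exp (t * c)) ≤
      max ((1 - Real.exp (-t)) ^ (-d)) (Real.exp (t * d)) := by
  rcases ht.eq_or_lt with rfl | ht0
  · simp [Real.zero_rpow_le_one]
  have hpos : 0 < 1 - Real.exp (-t) := sub_pos.mpr (Real.exp_lt_one_iff.mpr (by linarith))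
  have hle : 1 - Real.exp (-t) ≤ 1 := sub_le_self 1 (Real.exp_pos _).le
  exact max_le_max (Real.rpow_le_rpow_of_exponent_ge hpos hle (neg_le_neg hcd)) (by gcongr)

theorem one_div_sub_one_div_le_one_div_two_mul {p q : ℝ} (hp : 0 < p) (hp2q : p ≤ 2 * q) :
    1 / q - 1 / p ≤ 1 / (2 * q) := by
  have hle : 1 / (2 * q) ≤ 1 / p := one_div_le_one_div_of_le hp hp2q
  have hhalf : 1 / q = 1 / (2 * q) + 1 / (2 * q) := by ring
  linarith

theorem integral_mul_rpow_le_rpow_sub_one_mul_integral {α : Type*} [MeasurableSpace α]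
    {μ : Measure α} {w g : α → ℝ} {M r : ℝ} (hw : ∀ᵐ x ∂μ, 0 ≤ w x) (hg : ∀ᵐ x ∂μ, 0 ≤ g x)
    (hgM : ∀ᵐ x ∂μ, g x ≤ M) (hwg : Integrable (fun x ↦ w x * g x) μ) (hr : 1 ≤ r) :
    ∫ x, w x * g x ^ r ∂μ ≤ M ^ (r - 1) * ∫ x, w x * g x ∂μ := by
  rw [← integral_const_mul]
  refine integral_mono_of_nonneg ?_ (hwg.const_mul _) ?_
  · filter_upwards [hw, hg] with x hwx hgx using by positivity
  · filter_upwards [hw, hg, hgM] with x hwx hgx hgMx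
    calc w x * g x ^ r = g x ^ (r - 1) * (w x * g x) := by
          nth_rw 1 [← sub_add_cancel r 1]
          rw [Real.rpow_add_one' hgx (by linarith)]
          ring
      _ ≤ M ^ (r - 1) * (w x * g x) := by gcongr

/-! ### The Gamma function -/

theorem integrableOn_Ioi_exp_neg_mul_rpow {s : ℝ} (hs : -1 < s) :
    IntegrableOn (fun x ↦ Real.exp (-x) * x ^ s) (Ioi 0) := by
  simpa only [add_sub_cancel_right] using
    Real.GammaIntegral_convergent (s := s + 1) (by linarith)

theorem Gamma_add_one_eq_integral {s : ℝ} (hs : -1 < s) :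
    Real.Gamma (s + 1) = ∫ x in Ioi 0, Real.exp (-x) * x ^ s := by
  rw [Real.Gamma_eq_integral (by linarith), add_sub_cancel_right]

theorem exp_neg_mul_exp_neg_sub_mul (c x y : ℝ) :
    Real.exp (-c) * (Real.exp (-(x - c)) * y) = Real.exp (-x) * y := by
  rw [← mul_assoc, ← Real.exp_add]
  ring_nf

theorem integrableOn_Ioi_exp_neg_mul_sub_rpow {s : ℝ} (hs : -1 < s) (c : ℝ) :
    IntegrableOn (fun x ↦ Real.exp (-x) * (x - c) ^ s) (Ioi c) := by
  have shift := ((measurePreserving_sub_right volume c).integrableOn_comp_preimage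
    (Homeomorph.subRight c).measurableEmbedding).mpr (integrableOn_Ioi_exp_neg_mul_rpow hs)
  rw [preimage_sub_const_Ioi, zero_add] at shift
  simpa only [Function.comp_def, exp_neg_mul_exp_neg_sub_mul] using!
    shift.const_mul (Real.exp (-c))

theorem integral_Ioi_exp_neg_mul_sub_rpow {s : ℝ} (hs : -1 < s) (c : ℝ) :
    ∫ x in Ioi c, Real.exp (-x) * (x - c) ^ s = Real.exp (-c) * Real.Gamma (s + 1) := by
  have shift := (measurePreserving_sub_right volume c).setIntegral_preimage_emb
    (Homeomorph.subRight c).measurableEmbedding (fun x ↦ Real.exp (-x) * x ^ s) (Ioi 0)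
  rw [preimage_sub_const_Ioi, zero_add] at shift
  rw [Gamma_add_one_eq_integral hs, ← shift, ← integral_const_mul]
  simp only [exp_neg_mul_exp_neg_sub_mul]

theorem exp_one_mul_exp_neg_mul_rpow_self_le_Gamma_add_one {q : ℝ} (hq : 1 ≤ q) :
    Real.exp 1 * (Real.exp (-q) * q ^ q) ≤ Real.Gamma (q + 1) := by
  have hq0 : 0 < q := by linarith
  have hsub : Ioi (q - 1) ⊆ Ioi 0 := Ioi_subset_Ioi (by linarith)
  have integrable_rpow := integrableOn_Ioi_exp_neg_mul_rpow (by linarith : -1 < q)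
  have integrable_line := integrableOn_Ioi_exp_neg_mul_sub_rpow (by norm_num : (-1 : ℝ) < 1) (q - 1)
  calc Real.exp 1 * (Real.exp (-q) * q ^ q)
      = ∫ x in Ioi (q - 1), q ^ q * (Real.exp (-x) * (x - (q - 1)) ^ (1 : ℝ)) := by
        rw [integral_const_mul, integral_Ioi_exp_neg_mul_sub_rpow (by norm_num),
          one_add_one_eq_two, Real.Gamma_two, ← mul_assoc, ← Real.exp_add]
        ring_nf
    _ ≤ ∫ x in Ioi (q - 1), Real.exp (-x) * x ^ q := by
        refine setIntegral_mono_on (integrable_line.const_mul _) (integrable_rpow.mono_set hsub)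
          measurableSet_Ioi fun x hx ↦ ?_
        have tangent :=
          rpow_add_mul_rpow_sub_one_mul_sub_le_rpow hq0 (le_of_lt (hsub hx : 0 < x)) hq
        calc q ^ q * (Real.exp (-x) * (x - (q - 1)) ^ (1 : ℝ))
            = Real.exp (-x) * (q ^ q + q * q ^ (q - 1) * (x - q)) := by
              rw [Real.rpow_sub_one hq0.ne', Real.rpow_one]
              field_simp
              ring
          _ ≤ Real.exp (-x) * x ^ q := by gcongr
    _ ≤ ∫ x in Ioi 0, Real.exp (-x) * x ^ q :=
        setIntegral_mono_set integrable_rpow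
          (ae_restrict_of_forall_mem measurableSet_Ioi fun x (hx : 0 < x) ↦ by
            simp only [Pi.zero_apply]; positivity) hsub.eventuallyLE
    _ = Real.Gamma (q + 1) := (Gamma_add_one_eq_integral (by linarith)).symm

theorem exp_neg_mul_rpow_rpow {q r y : ℝ} (hy : 0 ≤ y) :
    (Real.exp (-y) * y ^ q) ^ r = y ^ (q * r) * Real.exp (-(r * y)) := by
  rw [Real.mul_rpow (by positivity) (by positivity), ← Real.exp_mul, ← Real.rpow_mul hy]
  ring_nf

theorem Gamma_mul_add_one_eq_rpow_mul_integral {q r : ℝ} (hqr : -1 < q * r) (hr : 0 < r) :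
    Real.Gamma (q * r + 1) =
      r ^ (q * r) * (r * ∫ y in Ioi 0, (Real.exp (-y) * y ^ q) ^ r) := by
  have scaling := Real.integral_rpow_mul_exp_neg_mul_Ioi (a := q * r + 1) (by linarith) hr
  rw [add_sub_cancel_right, one_div, Real.inv_rpow hr.le, Real.rpow_add_one hr.ne'] at scaling
  rw [setIntegral_congr_fun measurableSet_Ioi fun y hy ↦ exp_neg_mul_rpow_rpow (le_of_lt hy),
    scaling]
  field_simp

theorem integral_exp_neg_mul_rpow_rpow_le {q r : ℝ} (hq : 0 < q) (hr : 1 ≤ r) :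
    ∫ y in Ioi 0, (Real.exp (-y) * y ^ q) ^ r ≤
      (Real.exp (-q) * q ^ q) ^ (r - 1) * Real.Gamma (q + 1) := by
  have hint := integrableOn_Ioi_exp_neg_mul_rpow (by linarith : -1 < q)
  have := integral_mul_rpow_le_rpow_sub_one_mul_integral (w := fun _ ↦ 1)
    (.of_forall fun _ ↦ zero_le_one)
    (ae_restrict_of_forall_mem measurableSet_Ioi fun y (hy : 0 < y) ↦ by positivity)
    (ae_restrict_of_forall_mem measurableSet_Ioi fun y (hy : 0 < y) ↦
      exp_neg_mul_rpow_le hq hy.le) (by simpa only [one_mul] using! hint) hr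
  simpa only [one_mul, Gamma_add_one_eq_integral (by linarith : -1 < q)] using this

theorem Gamma_mul_add_one_le {q r : ℝ} (hq : 1 ≤ q) (hr : 1 ≤ r) :
    Real.Gamma (q * r + 1) ≤ r ^ (q * r) * Real.Gamma (q + 1) ^ r := by
  have hq0 : 0 < q := by linarith
  have hr0 : 0 < r := by linarith
  set G := Real.Gamma (q + 1)
  have hG : 0 < G := Real.Gamma_pos_of_pos (by linarith)
  have le_exp : r ≤ Real.exp 1 ^ (r - 1) := by
    rw [← Real.exp_mul, one_mul]
    linarith [Real.add_one_le_exp (r - 1)]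
  calc Real.Gamma (q * r + 1)
      = r ^ (q * r) * (r * ∫ y in Ioi 0, (Real.exp (-y) * y ^ q) ^ r) :=
        Gamma_mul_add_one_eq_rpow_mul_integral (by linarith [mul_pos hq0 hr0]) hr0
    _ ≤ r ^ (q * r) * (r * ((Real.exp (-q) * q ^ q) ^ (r - 1) * G)) := by
        gcongr
        exact integral_exp_neg_mul_rpow_rpow_le hq0 hr
    _ ≤ r ^ (q * r) * (Real.exp 1 ^ (r - 1) * ((Real.exp (-q) * q ^ q) ^ (r - 1) * G)) := by
        gcongr
    _ = r ^ (q * r) * ((Real.exp 1 * (Real.exp (-q) * q ^ q)) ^ (r - 1) * G) := by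
        rw [Real.mul_rpow (x := Real.exp 1) (by positivity) (by positivity), mul_assoc]
    _ ≤ r ^ (q * r) * (G ^ (r - 1) * G) := by
        gcongr
        exact exp_one_mul_exp_neg_mul_rpow_self_le_Gamma_add_one hq
    _ = r ^ (q * r) * G ^ r := by rw [← Real.rpow_add_one hG.ne', sub_add_cancel]

/-! ### Moments of the shifted exponential variable -/

/-- The moment `E|X - t|ˢ` for `X` exponential with parameter 1, that is, `‖X - t‖ₛ` before the
root of order `s` is taken. -/
noncomputable def expShiftMoment (s t : ℝ) : ℝ :=
  ∫ x in Ioi (0 : ℝ), Real.exp (-x) * |x - t| ^ s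

/-- The truncated moment `E[(t - X)ˢ; X ≤ t]` for `X` exponential with parameter 1. It is meant for
`0 ≤ t`, where `0..t` is an unreversed interval on which `t - x = |x - t|`. -/
noncomputable def expHeadMoment (s t : ℝ) : ℝ :=
  ∫ x in (0 : ℝ)..t, Real.exp (-x) * (t - x) ^ s

section

variable {q r s t : ℝ}

theorem continuous_exp_neg_mul_sub_rpow (hs : 0 ≤ s) (t : ℝ) :
    Continuous fun x : ℝ ↦ Real.exp (-x) * (t - x) ^ s := by
  fun_prop (disch := exact fun _ ↦ Or.inr hs)

theorem expHeadMoment_nonneg (ht : 0 ≤ t) : 0 ≤ expHeadMoment s t :=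
  intervalIntegral.integral_nonneg ht fun x hx ↦ by
    have : 0 ≤ t - x := sub_nonneg.mpr hx.2
    positivity

theorem expShiftMoment_eq_expHeadMoment_add (hs : 0 ≤ s) (ht : 0 ≤ t) :
    expShiftMoment s t = expHeadMoment s t + Real.exp (-t) * Real.Gamma (s + 1) := by
  have head_eq : ∀ x ∈ Ioc 0 t,
      Real.exp (-x) * (t - x) ^ s = Real.exp (-x) * |x - t| ^ s := fun x hx ↦ by
    rw [abs_sub_comm, abs_of_nonneg (sub_nonneg.mpr hx.2)]
  have tail_eq : ∀ x ∈ Ioi t,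
      Real.exp (-x) * (x - t) ^ s = Real.exp (-x) * |x - t| ^ s := fun x hx ↦ by
    rw [abs_of_pos (sub_pos.mpr hx)]
  have head_integrable : IntegrableOn (fun x ↦ Real.exp (-x) * (t - x) ^ s) (Ioc 0 t) :=
    (continuous_exp_neg_mul_sub_rpow hs t).integrableOn_Ioc
  have tail_integrable := integrableOn_Ioi_exp_neg_mul_sub_rpow (by linarith : -1 < s) t
  rw [expShiftMoment, expHeadMoment, intervalIntegral.integral_of_le ht,
    ← integral_Ioi_exp_neg_mul_sub_rpow (by linarith) t, ← Ioc_union_Ioi_eq_Ioi ht,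
    setIntegral_union (Ioc_disjoint_Ioi le_rfl) measurableSet_Ioi
      (head_integrable.congr_fun head_eq measurableSet_Ioc)
      (tail_integrable.congr_fun tail_eq measurableSet_Ioi),
    setIntegral_congr_fun measurableSet_Ioc head_eq,
    setIntegral_congr_fun measurableSet_Ioi tail_eq]

theorem expShiftMoment_pos (hs : 0 ≤ s) (ht : 0 ≤ t) : 0 < expShiftMoment s t := by
  have hGamma : 0 < Real.Gamma (s + 1) := Real.Gamma_pos_of_pos (by linarith)
  rw [expShiftMoment_eq_expHeadMoment_add hs ht]
  exact add_pos_of_nonneg_of_pos (expHeadMoment_nonneg ht) (mul_pos (Real.exp_pos _) hGamma)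

theorem one_sub_exp_neg_mul_half_rpow_le_expHeadMoment (hq : 1 ≤ q) (ht : 0 < t) :
    (1 - Real.exp (-t)) * (t / 2) ^ q ≤ expHeadMoment q t := by
  set c := t / 2 with hc
  have hc0 : 0 < c := half_pos ht
  have integral_exp : ∫ x in (0 : ℝ)..t, Real.exp (-x) = 1 - Real.exp (-t) := by simp
  have integral_midpoint : ∫ x in (0 : ℝ)..t, (c - x) = 0 := by
    rw [intervalIntegral.integral_sub (by simp) (by simp), intervalIntegral.integral_const,
      integral_id, smul_eq_mul, hc]
    ring
  -- Replacing the weight `e⁻ˣ` of the linear term by `e⁻ᶜ` makes that term integrate to zero.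
  calc (1 - Real.exp (-t)) * c ^ q
      = ∫ x in (0 : ℝ)..t,
          (Real.exp (-x) * c ^ q + q * c ^ (q - 1) * Real.exp (-c) * (c - x)) := by
        rw [intervalIntegral.integral_add (Continuous.intervalIntegrable (by fun_prop) _ _)
          (Continuous.intervalIntegrable (by fun_prop) _ _), intervalIntegral.integral_mul_const,
          intervalIntegral.integral_const_mul, integral_exp, integral_midpoint, mul_zero, add_zero]
    _ ≤ expHeadMoment q t := by
        refine intervalIntegral.integral_mono_on ht.le
          (Continuous.intervalIntegrable (by fun_prop) _ _)
          ((continuous_exp_neg_mul_sub_rpow (by linarith) t).intervalIntegrable _ _) fun x hx ↦ ?_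
        have tangent := rpow_add_mul_rpow_sub_one_mul_sub_le_rpow hc0 (sub_nonneg.mpr hx.2) hq
        have weight : Real.exp (-c) * (c - x) ≤ Real.exp (-x) * (c - x) := by
          rcases le_total x c with h | h
          · exact mul_le_mul_of_nonneg_right (by gcongr) (sub_nonneg.mpr h)
          · exact mul_le_mul_of_nonpos_right (by gcongr) (sub_nonpos.mpr h)
        calc Real.exp (-x) * c ^ q + q * c ^ (q - 1) * Real.exp (-c) * (c - x)
            = Real.exp (-x) * c ^ q + q * c ^ (q - 1) * (Real.exp (-c) * (c - x)) := by ring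
          _ ≤ Real.exp (-x) * c ^ q + q * c ^ (q - 1) * (Real.exp (-x) * (c - x)) := by gcongr
          _ = Real.exp (-x) * (c ^ q + q * c ^ (q - 1) * (t - x - c)) := by
              rw [hc]
              ring
          _ ≤ Real.exp (-x) * (t - x) ^ q := by gcongr

theorem expHeadMoment_mul_le_rpow_sub_one_mul (hq : 0 ≤ q) (hr : 1 ≤ r) (ht : 0 ≤ t) :
    expHeadMoment (q * r) t ≤ (t ^ q) ^ (r - 1) * expHeadMoment q t := by
  have hpow : ∀ x ∈ Ioc 0 t,
      Real.exp (-x) * (t - x) ^ (q * r) = Real.exp (-x) * ((t - x) ^ q) ^ r := fun x hx ↦ by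
    rw [Real.rpow_mul (sub_nonneg.mpr hx.2)]
  simp only [expHeadMoment, intervalIntegral.integral_of_le ht]
  rw [setIntegral_congr_fun measurableSet_Ioc hpow]
  exact integral_mul_rpow_le_rpow_sub_one_mul_integral (.of_forall fun x ↦ (Real.exp_pos _).le)
    (ae_restrict_of_forall_mem measurableSet_Ioc fun x hx ↦
      Real.rpow_nonneg (sub_nonneg.mpr hx.2) q)
    (ae_restrict_of_forall_mem measurableSet_Ioc fun x hx ↦
      Real.rpow_le_rpow (sub_nonneg.mpr hx.2) (by linarith [hx.1]) hq)
    (continuous_exp_neg_mul_sub_rpow hq t).integrableOn_Ioc hr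

theorem expHeadMoment_mul_le (hq : 1 ≤ q) (hr : 1 ≤ r) (ht : 0 ≤ t) :
    expHeadMoment (q * r) t ≤
      r ^ (q * r) * ((1 - Real.exp (-t)) ^ (1 - r) * expHeadMoment q t ^ r) := by
  rcases ht.eq_or_lt with rfl | ht0
  · simp only [expHeadMoment, intervalIntegral.integral_same]
    rw [neg_zero, Real.exp_zero, sub_self]
    positivity
  set a := 1 - Real.exp (-t)
  set I := expHeadMoment q t
  have ha : 0 < a := sub_pos.mpr (Real.exp_lt_one_iff.mpr (by linarith))
  have hlower : a * (t / 2) ^ q ≤ I := one_sub_exp_neg_mul_half_rpow_le_expHeadMoment hq ht0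
  have hI : 0 < I := lt_of_lt_of_le (by positivity) hlower
  have sup_bound : t ^ q ≤ 2 ^ q * (a⁻¹ * I) := by
    calc t ^ q = 2 ^ q * (t / 2) ^ q := by
          rw [← Real.mul_rpow zero_le_two (by positivity), mul_div_cancel₀ t two_ne_zero]
      _ ≤ 2 ^ q * (a⁻¹ * I) := by gcongr; exact (le_inv_mul_iff₀ ha).mpr hlower
  calc expHeadMoment (q * r) t ≤ (t ^ q) ^ (r - 1) * I :=
        expHeadMoment_mul_le_rpow_sub_one_mul (by linarith) hr ht
    _ ≤ (2 ^ q * (a⁻¹ * I)) ^ (r - 1) * I := by gcongr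
    _ = (2 ^ (r - 1)) ^ q * (a ^ (1 - r) * (I ^ (r - 1) * I)) := by
        rw [Real.mul_rpow (by positivity) (by positivity), Real.mul_rpow (by positivity) hI.le,
          ← Real.rpow_mul zero_le_two, mul_comm q, Real.rpow_mul zero_le_two, Real.inv_rpow ha.le,
          ← Real.rpow_neg ha.le, neg_sub]
        ring
    _ ≤ (r ^ r) ^ q * (a ^ (1 - r) * (I ^ (r - 1) * I)) := by
        gcongr
        exact two_rpow_sub_one_le_rpow_self hr
    _ = r ^ (q * r) * (a ^ (1 - r) * I ^ r) := by
        rw [← Real.rpow_add_one hI.ne', sub_add_cancel, ← Real.rpow_mul (by linarith), mul_comm r q]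

theorem exp_neg_mul_Gamma_mul_add_one_le (hq : 1 ≤ q) (hr : 1 ≤ r) (t : ℝ) :
    Real.exp (-t) * Real.Gamma (q * r + 1) ≤
      r ^ (q * r) * (Real.exp (-t) ^ (1 - r) * (Real.exp (-t) * Real.Gamma (q + 1)) ^ r) := by
  have hGamma : 0 ≤ Real.Gamma (q + 1) := Real.Gamma_nonneg_of_nonneg (by linarith)
  calc Real.exp (-t) * Real.Gamma (q * r + 1)
      ≤ Real.exp (-t) * (r ^ (q * r) * Real.Gamma (q + 1) ^ r) := by
        gcongr
        exact Gamma_mul_add_one_le hq hr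
    _ = (Real.exp (-t) ^ (1 - r) * Real.exp (-t) ^ r) *
          (r ^ (q * r) * Real.Gamma (q + 1) ^ r) := by
        rw [← Real.rpow_add (Real.exp_pos _), sub_add_cancel, Real.rpow_one]
    _ = r ^ (q * r) * (Real.exp (-t) ^ (1 - r) * (Real.exp (-t) * Real.Gamma (q + 1)) ^ r) := by
        rw [Real.mul_rpow (Real.exp_pos _).le hGamma]
        ring

theorem expShiftMoment_mul_le (hq : 1 ≤ q) (hr : 1 ≤ r) (ht : 0 ≤ t) :
    expShiftMoment (q * r) t ≤ r ^ (q * r) *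
      (max ((1 - Real.exp (-t)) ^ (1 - r)) (Real.exp (-t) ^ (1 - r)) *
        expShiftMoment q t ^ r) := by
  have hq0 : 0 ≤ q := by linarith
  rw [expShiftMoment_eq_expHeadMoment_add hq0 ht,
    expShiftMoment_eq_expHeadMoment_add (by positivity) ht]
  set I := expHeadMoment q t
  set J := Real.exp (-t) * Real.Gamma (q + 1)
  set K := max ((1 - Real.exp (-t)) ^ (1 - r)) (Real.exp (-t) ^ (1 - r))
  have hI : 0 ≤ I := expHeadMoment_nonneg ht
  have hJ : 0 ≤ J := mul_nonneg (Real.exp_pos _).le (Real.Gamma_nonneg_of_nonneg (by linarith))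
  have : 0 ≤ K := le_max_of_le_right (by positivity)
  calc expHeadMoment (q * r) t + Real.exp (-t) * Real.Gamma (q * r + 1)
      ≤ r ^ (q * r) * (K * I ^ r) + r ^ (q * r) * (K * J ^ r) := by
        gcongr ?_ + ?_
        · exact (expHeadMoment_mul_le hq hr ht).trans (by gcongr; exact le_max_left _ _)
        · exact (exp_neg_mul_Gamma_mul_add_one_le hq hr t).trans (by gcongr; exact le_max_right _ _)
    _ = r ^ (q * r) * (K * (I ^ r + J ^ r)) := by ring
    _ ≤ r ^ (q * r) * (K * (I + J) ^ r) := by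
        gcongr
        exact Real.add_rpow_le_rpow_add hI hJ hr

theorem expShiftNorm_mul_le (hq : 1 ≤ q) (hr : 1 ≤ r) (ht : 0 ≤ t) :
    expShiftNorm (q * r) t ≤
      r * max ((1 - Real.exp (-t)) ^ (1 - r)) (Real.exp (-t) ^ (1 - r)) ^ (1 / (q * r)) *
        expShiftNorm q t := by
  have hq0 : 0 < q := by linarith
  have hr0 : 0 < r := by linarith
  have hm : 0 < expShiftMoment q t := expShiftMoment_pos hq0.le ht
  have hM : 0 < expShiftMoment (q * r) t := expShiftMoment_pos (by positivity) ht
  set K := max ((1 - Real.exp (-t)) ^ (1 - r)) (Real.exp (-t) ^ (1 - r))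
  have hK : 0 ≤ K := le_max_of_le_right (by positivity)
  calc expShiftMoment (q * r) t ^ (1 / (q * r))
      ≤ (r ^ (q * r) * (K * expShiftMoment q t ^ r)) ^ (1 / (q * r)) := by
        gcongr
        exact expShiftMoment_mul_le hq hr ht
    _ = r * K ^ (1 / (q * r)) * expShiftMoment q t ^ (1 / q) := by
        rw [Real.mul_rpow (by positivity) (by positivity), Real.mul_rpow hK (by positivity),
          ← Real.rpow_mul hr0.le, mul_one_div_cancel (by positivity), Real.rpow_one,
          ← Real.rpow_mul hm.le, mul_one_div, div_mul_cancel_right₀ hr0.ne', one_div q, mul_assoc]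

end

/-- For `t = 0` and `q < p` the first entry of the maximum is `0` raised to a negative power, which
is `0` here and not infinite, so the bound reads `p / q`. -/
theorem expShiftNorm_ratio_le_max_general {p q t : ℝ} (hq : 1 ≤ q) (hqp : q ≤ p) (ht : 0 ≤ t) :
    expShiftNorm p t / expShiftNorm q t ≤
      (p / q) *
        max ((1 - Real.exp (-t)) ^ (-(1 / q - 1 / p))) (Real.exp (t * (1 / q - 1 / p))) := by
  have hq0 : 0 < q := by linarith
  obtain ⟨r, hr, rfl⟩ : ∃ r, 1 ≤ r ∧ p = q * r :=
    ⟨p / q, (one_le_div hq0).mpr hqp, (mul_div_cancel₀ p hq0.ne').symm⟩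
  have ha : 0 ≤ 1 - Real.exp (-t) := sub_nonneg.mpr (Real.exp_le_one_iff.mpr (by linarith))
  have hexponent : (1 - r) * (1 / (q * r)) = -(1 / q - 1 / (q * r)) := by
    field_simp
    ring
  have hnorm : 0 < expShiftNorm q t := Real.rpow_pos_of_pos (expShiftMoment_pos hq0.le ht) _
  rw [div_le_iff₀ hnorm, mul_div_cancel_left₀ r hq0.ne']
  have hle := expShiftNorm_mul_le hq hr ht
  rwa [Real.rpow_max (by positivity) (by positivity) (by positivity), ← Real.rpow_mul ha,
    ← Real.rpow_mul (Real.exp_pos _).le, hexponent, ← Real.exp_mul, neg_mul_neg] at hle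

/-- If `X` is exponential with parameter 1, `t ≥ 0` and `1 ≤ q ≤ p ≤ 2q`, then
`‖X - t‖_p / ‖X - t‖_q ≤ (p/q) max((1 - e^{-t})^{-1/(2q)}, e^{t/(2q)})`. -/
theorem expShiftNorm_ratio_le_max
    (p q t : ℝ) (hq : 1 ≤ q) (hqp : q ≤ p) (hp2q : p ≤ 2 * q) (ht : 0 ≤ t) :
    expShiftNorm p t / expShiftNorm q t ≤
      (p / q) * max ((1 - Real.exp (-t)) ^ (-1 / (2 * q))) (Real.exp (t / (2 * q))) := by
  rw [neg_div, ← mul_one_div t]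
  exact (expShiftNorm_ratio_le_max_general hq hqp ht).trans <| mul_le_mul_of_nonneg_left
    (max_one_sub_exp_neg_rpow_neg_exp_mul_mono
      (one_div_sub_one_div_le_one_div_two_mul (by linarith) hp2q) ht)
    (div_nonneg (by linarith) (by linarith))
end

section
/- Let q ≥ 2, 1 ≤ λ ≤ 2, 2r₀ ≤ r ≤ e where r₀ = e·W(1/e), let t = r·q/e, and set α = t^{−q}·∫_0^t e^{x−t}·x^q dx and g(q) = Γ(q+1)·(q/e)^{−q}. Then (α·(r/λ)^{qλ} + √λ·e^{−r·q/e}·g(q))^{1/λ} ≤ C₀^q·(α·r^q + e^{−r·q/e}·g(q)), where C₀ = e^{W(1/e)}. -/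
/-!
Write `E = C₀^q` and `B = e^{-rq/e} g(q)`. Raising the claim to the power `λ`, Bernoulli's
inequality separates the two terms on the right: as soon as `A = E α r^q ≥ 1`,
`(A + E B)^λ ≥ A^λ + λ A^{λ-1} E B ≥ A^λ + √λ B`.
The first terms compare because `λ^λ ≥ e^{λ-1}`, which gives `α (r/λ)^{qλ} ≤ (α r^q)^λ` whenever
`α e^q ≥ 1`. Both conditions on `α` follow from `α ≥ 1/4`, since `C₀ r ≥ C₀ · 2r₀ = 2` and `q ≥ 2`.
Finally `α ≥ t / (t + q + 1)`, because `e^{x-t} x^{q+1}` is a primitive of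
`e^{x-t} x^q (x + q + 1)`, and `t ≥ q/2` because `W(1/e) ≥ 1/4`.
-/

open Real

theorem exp_sub_one_le_rpow_self {x : ℝ} (hx : 0 < x) : exp (x - 1) ≤ x ^ x := by
  rw [rpow_def_of_pos hx, exp_le_exp]
  calc x - 1 = (1 - x⁻¹) * x := by field_simp
    _ ≤ log x * x := by gcongr; exact one_sub_inv_le_log_of_pos hx

theorem rpow_add_mul_rpow_sub_one_mul_le_add_rpow {x y p : ℝ} (hx : 0 < x) (hxy : 0 ≤ x + y)
    (hp : 1 ≤ p) : x ^ p + p * x ^ (p - 1) * y ≤ (x + y) ^ p := by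
  have hyx : -1 ≤ y / x := by rw [le_div_iff₀ hx]; linarith
  calc x ^ p + p * x ^ (p - 1) * y = x ^ p * (1 + p * (y / x)) := by
        rw [rpow_sub_one hx.ne']; ring
    _ ≤ x ^ p * (1 + y / x) ^ p := by
        gcongr; exact one_add_mul_self_le_rpow_one_add hyx hp
    _ = (x + y) ^ p := by
        rw [← mul_rpow hx.le (by linarith), mul_add, mul_one, mul_div_cancel₀ _ hx.ne']

theorem mul_div_rpow_mul_le_mul_rpow_rpow {a q r p : ℝ} (hq : 0 ≤ q) (hr : 0 ≤ r) (hp : 1 ≤ p)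
    (ha : 1 ≤ a * exp q) : a * (r / p) ^ (q * p) ≤ (a * r ^ q) ^ p := by
  have hp0 : 0 < p := by linarith
  have ha0 : 0 < a := pos_of_mul_pos_left (by linarith) (exp_pos q).le
  have hpq : exp q ^ (p - 1) ≤ p ^ (q * p) := calc
    exp q ^ (p - 1) = exp (p - 1) ^ q := by rw [← exp_mul, ← exp_mul, mul_comm]
    _ ≤ (p ^ p) ^ q := by gcongr; exact exp_sub_one_le_rpow_self hp0
    _ = p ^ (q * p) := by rw [← rpow_mul hp0.le, mul_comm]
  have hap : a ≤ a ^ p * p ^ (q * p) := calc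
    a ≤ a * (a * exp q) ^ (p - 1) :=
      le_mul_of_one_le_right ha0.le (one_le_rpow ha (by linarith))
    _ = a ^ p * exp q ^ (p - 1) := by
      rw [mul_rpow ha0.le (exp_pos q).le, rpow_sub_one ha0.ne']; field_simp
    _ ≤ a ^ p * p ^ (q * p) := by gcongr
  calc a * (r / p) ^ (q * p) = a * r ^ (q * p) / p ^ (q * p) := by
        rw [div_rpow hr hp0.le, mul_div_assoc]
    _ ≤ a ^ p * p ^ (q * p) * r ^ (q * p) / p ^ (q * p) := by gcongr
    _ = a ^ p * r ^ (q * p) := by field_simp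
    _ = (a * r ^ q) ^ p := by rw [mul_rpow ha0.le (by positivity), rpow_mul hr]

theorem add_mul_rpow_one_div_le_mul_add {a q r p c E B : ℝ} (hq : 0 ≤ q) (hr : 0 ≤ r)
    (hp : 1 ≤ p) (hc : 0 ≤ c) (hcp : c ≤ p) (hE : 1 ≤ E) (hB : 0 ≤ B) (ha : 1 ≤ a * exp q)
    (hA : 1 ≤ E * (a * r ^ q)) :
    (a * (r / p) ^ (q * p) + c * B) ^ (1 / p) ≤ E * (a * r ^ q + B) := by
  have hp0 : 0 < p := by linarith
  have ha0 : 0 < a := pos_of_mul_pos_left (by linarith) (exp_pos q).le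
  have h_first : a * (r / p) ^ (q * p) ≤ (E * (a * r ^ q)) ^ p :=
    (mul_div_rpow_mul_le_mul_rpow_rpow hq hr hp ha).trans <|
      rpow_le_rpow (by positivity) (le_mul_of_one_le_left (by positivity) hE) hp0.le
  have h_second : c * B ≤ p * (E * (a * r ^ q)) ^ (p - 1) * (E * B) := calc
    c * B ≤ p * (E * B) := by gcongr; exact le_mul_of_one_le_left hB hE
    _ ≤ p * (E * (a * r ^ q)) ^ (p - 1) * (E * B) := by
      gcongr
      exact le_mul_of_one_le_right hp0.le (one_le_rpow hA (by linarith))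
  rw [one_div, rpow_inv_le_iff_of_pos (by positivity) (by positivity) hp0]
  calc a * (r / p) ^ (q * p) + c * B
      ≤ (E * (a * r ^ q)) ^ p + p * (E * (a * r ^ q)) ^ (p - 1) * (E * B) := by gcongr
    _ ≤ (E * (a * r ^ q) + E * B) ^ p :=
        rpow_add_mul_rpow_sub_one_mul_le_add_rpow (by linarith) (by positivity) hp
    _ = (E * (a * r ^ q + B)) ^ p := by rw [mul_add]

theorem intervalIntegrable_exp_sub_mul_rpow {q : ℝ} (hq : -1 < q) (a b t : ℝ) :
    IntervalIntegrable (fun x => exp (x - t) * x ^ q) MeasureTheory.volume a b :=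
  (intervalIntegral.intervalIntegrable_rpow' hq).continuousOn_mul (by fun_prop)

theorem integral_exp_sub_mul_rpow_mul_add {q t : ℝ} (hq : -1 < q) (ht : 0 ≤ t) :
    ∫ x in (0 : ℝ)..t, exp (x - t) * x ^ q * (x + q + 1) = t ^ (q + 1) := by
  have h_deriv : ∀ x ∈ Set.Ioo 0 t, HasDerivAt (fun x => exp (x - t) * x ^ (q + 1))
      (exp (x - t) * x ^ q * (x + q + 1)) x := by
    intro x hx
    have h_exp : HasDerivAt (fun x => exp (x - t)) (exp (x - t) * 1) x :=
      ((hasDerivAt_id x).sub_const t).exp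
    refine (h_exp.mul (hasDerivAt_rpow_const (Or.inl hx.1.ne'))).congr_deriv ?_
    rw [add_sub_cancel_right, rpow_add_one hx.1.ne']
    ring
  have h_cont : ContinuousOn (fun x => exp (x - t) * x ^ (q + 1)) (Set.Icc 0 t) :=
    (by fun_prop : Continuous fun x : ℝ => exp (x - t)).continuousOn.mul
      (continuous_rpow_const (by linarith)).continuousOn
  rw [intervalIntegral.integral_eq_sub_of_hasDerivAt_of_le ht h_cont h_deriv
    ((intervalIntegrable_exp_sub_mul_rpow hq 0 t t).mul_continuousOn (by fun_prop))]
  simp [zero_rpow (by linarith : q + 1 ≠ 0)]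

theorem rpow_add_one_le_mul_integral_exp_sub_mul_rpow {q t : ℝ} (hq : -1 < q) (ht : 0 ≤ t) :
    t ^ (q + 1) ≤ (t + q + 1) * ∫ x in (0 : ℝ)..t, exp (x - t) * x ^ q := by
  have h_int := intervalIntegrable_exp_sub_mul_rpow hq 0 t t
  rw [← integral_exp_sub_mul_rpow_mul_add hq ht, mul_comm, ← intervalIntegral.integral_mul_const]
  refine intervalIntegral.integral_mono_on ht (h_int.mul_continuousOn (by fun_prop))
    (h_int.mul_const _) fun x hx => ?_
  have hx0 : 0 ≤ x := hx.1
  gcongr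
  exact hx.2

theorem div_le_rpow_neg_mul_integral_exp_sub_mul_rpow {q t : ℝ} (hq : -1 < q) (ht : 0 < t) :
    t / (t + q + 1) ≤ t ^ (-q) * ∫ x in (0 : ℝ)..t, exp (x - t) * x ^ q := by
  have h := rpow_add_one_le_mul_integral_exp_sub_mul_rpow hq ht.le
  rw [rpow_add_one ht.ne'] at h
  rw [rpow_neg ht.le, inv_mul_eq_div, div_le_div_iff₀ (by linarith) (by positivity)]
  linarith

theorem one_fourth_le_rpow_neg_mul_integral_exp_sub_mul_rpow {q t : ℝ} (hq : 2 ≤ q)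
    (hqt : q / 2 ≤ t) : 1 / 4 ≤ t ^ (-q) * ∫ x in (0 : ℝ)..t, exp (x - t) * x ^ q := by
  refine le_trans ?_
    (div_le_rpow_neg_mul_integral_exp_sub_mul_rpow (by linarith : -1 < q) (by linarith : 0 < t))
  rw [div_le_div_iff₀] <;> linarith

theorem one_fourth_le_of_mul_exp_eq_exp_neg_one {w : ℝ} (hw : w * exp w = exp (-1)) :
    1 / 4 ≤ w := by
  have h_exp : exp (5 / 4) ≤ 4 := by
    rw [← le_log_iff_exp_le (by norm_num), show (4 : ℝ) = 2 ^ 2 by norm_num, log_pow]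
    linarith [log_two_gt_d9]
  by_contra! h
  refine hw.not_lt ?_
  calc w * exp w < 1 / 4 * exp (1 / 4) :=
        mul_lt_mul h (exp_le_exp.2 h.le) (exp_pos w) (by norm_num)
    _ = exp (5 / 4) / 4 * exp (-1) := by
        rw [show (1 / 4 : ℝ) = 5 / 4 + -1 by norm_num, exp_add]; ring
    _ ≤ exp (-1) := mul_le_of_le_one_left (exp_pos _).le (by linarith)

theorem key_ineq_small_r_general {w q r lam t α : ℝ} (hwe : w * exp w = exp (-1)) (hq : 2 ≤ q)
    (hlam : 1 ≤ lam) (hr : 2 * (exp 1 * w) ≤ r) (ht : t = r * q / exp 1)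
    (hα : α = t ^ (-q) * ∫ x in (0 : ℝ)..t, exp (x - t) * x ^ q) :
    (α * (r / lam) ^ (q * lam) +
        √lam * exp (-(r * q / exp 1)) * (Gamma (q + 1) * (q / exp 1) ^ (-q))) ^ (1 / lam) ≤
      exp w ^ q *
        (α * r ^ q + exp (-(r * q / exp 1)) * (Gamma (q + 1) * (q / exp 1) ^ (-q))) := by
  have hq0 : 0 ≤ q := by linarith
  have hw : 1 / 4 ≤ w := one_fourth_le_of_mul_exp_eq_exp_neg_one hwe
  have her : exp 1 / 2 ≤ r := by nlinarith [exp_pos 1]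
  have hr0 : 0 < r := by linarith [exp_pos 1]
  have hqt : q / 2 ≤ t := by
    rw [ht, le_div_iff₀ (exp_pos 1)]
    linarith [mul_le_mul_of_nonneg_right her hq0]
  have hα4 : 1 / 4 ≤ α := hα ▸ one_fourth_le_rpow_neg_mul_integral_exp_sub_mul_rpow hq hqt
  have hCr : 2 ≤ exp w * r := calc
    2 = exp w * (2 * (exp 1 * w)) := by
      rw [show exp w * (2 * (exp 1 * w)) = 2 * (exp 1 * (w * exp w)) by ring, hwe, ← exp_add]
      norm_num
    _ ≤ exp w * r := by gcongr
  have hα_mul_rpow {b : ℝ} (hb : 2 ≤ b) : 1 ≤ α * b ^ q := calc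
    1 = 1 / 4 * (2 : ℝ) ^ (2 : ℝ) := by norm_num
    _ ≤ α * 2 ^ q := by gcongr; norm_num
    _ ≤ α * b ^ q := by gcongr
  rw [mul_assoc √lam]
  refine add_mul_rpow_one_div_le_mul_add hq0 hr0.le hlam (sqrt_nonneg lam)
    (sqrt_le_self_iff.2 (Or.inr hlam)) ?_ ?_ ?_ ?_
  · exact one_le_rpow (one_le_exp (by linarith)) hq0
  · have := Gamma_pos_of_pos (by linarith : 0 < q + 1)
    positivity
  · simpa only [exp_one_rpow] using hα_mul_rpow exp_one_gt_two.le
  · rw [mul_left_comm, ← mul_rpow (exp_pos w).le hr0.le]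
    exact hα_mul_rpow hCr

/-- If `q ≥ 2`, `1 ≤ λ ≤ 2`, `2r₀ ≤ r ≤ e` with `r₀ = e W(1/e)`, `t = r q / e`,
`α = t^{-q} ∫_0^t e^{x-t} x^q dx` and `g(q) = Γ(q+1) (q/e)^{-q}`, then
`(α (r/λ)^{qλ} + √λ e^{-rq/e} g(q))^{1/λ} ≤ C₀^q (α r^q + e^{-rq/e} g(q))`,
where `C₀ = e^{W(1/e)}`. -/
theorem key_ineq_small_r
    (w : ℝ) (hw : 0 < w) (hwe : w * Real.exp w = Real.exp (-1))
    (q r lam t α : ℝ) (hq : 2 ≤ q)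
    (hlam1 : 1 ≤ lam) (hlam2 : lam ≤ 2)
    (hr1 : 2 * (Real.exp 1 * w) ≤ r) (hr2 : r ≤ Real.exp 1)
    (ht : t = r * q / Real.exp 1)
    (hα : α = t ^ (-q) * ∫ x in (0 : ℝ)..t, Real.exp (x - t) * x ^ q) :
    (α * (r / lam) ^ (q * lam) +
        Real.sqrt lam * Real.exp (-(r * q / Real.exp 1)) *
          (Real.Gamma (q + 1) * (q / Real.exp 1) ^ (-q))) ^ (1 / lam) ≤
      Real.exp w ^ q *
        (α * r ^ q + Real.exp (-(r * q / Real.exp 1)) *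
          (Real.Gamma (q + 1) * (q / Real.exp 1) ^ (-q))) := by
  exact key_ineq_small_r_general hwe hq hlam1 hr1 ht hα
end

section
/- Let X have the exponential distribution with parameter 1, let p ≥ q ≥ 2, t ≥ q, and suppose p/q ≥ √2/C₀ where C₀ = e^{W(1/e)}. Then ‖X − t‖_p ≤ C₀·(p/q)·‖X − t‖_q. -/
open MeasureTheory

/-!
Monotonicity of the `L^q` norms gives `‖X - t‖_q ≥ ‖X - t‖_2 = √(t² - 2t + 2) ≥ t / √2`. In the
other direction, `|X - t| ≤ t` when `X ≤ t`, while conditionally on `X > t` the variable `X - t` is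
again exponential, so `E|X - t|^p ≤ (1 - e^{-t}) t^p + e^{-t} Γ(p + 1)`. As `Γ(p + 1) ≤ (p / √2)^p`
for `p ≥ 2`, with equality at `p = 2`, this yields `‖X - t‖_p ≤ max t (p / √2)`. The quotient of the
two bounds is `max √2 (p / t)`, and `p / t ≤ p / q ≤ C₀ p / q` while `√2 ≤ C₀ p / q`.
-/

section

open Real Set ProbabilityTheory

variable {E : Type*} [NormedAddCommGroup E] [NormedSpace ℝ E] {p q r s t : ℝ}

lemma rpow_le_rpow_mul_exp {u b : ℝ} (hu : 0 ≤ u) (hb : 0 < b) (hr : 0 ≤ r) :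
    u ^ r ≤ b ^ r * exp (r * (u / b - 1)) := by
  have hlin : u / b ≤ exp (u / b - 1) := by linarith [add_one_le_exp (u / b - 1)]
  calc u ^ r ≤ (b * exp (u / b - 1)) ^ r :=
        rpow_le_rpow hu ((div_le_iff₀' hb).mp hlin) hr
    _ = b ^ r * exp (r * (u / b - 1)) := by
        rw [mul_rpow hb.le (exp_pos _).le, ← exp_mul, mul_comm r]

-- The right-hand side is, up to a constant, the Gamma integrand of exponent `s` at rate `s / y`,
-- and touches the left-hand side at `x = y`.
lemma exp_neg_mul_rpow_le_mul_rpow_mul_exp {x y : ℝ} (hx : 0 < x) (hy : 0 < y) (hsy : s ≤ y) :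
    exp (-x) * x ^ (y - 1) ≤
      y ^ (y - s) * exp (s - y) * (x ^ (s - 1) * exp (-(s / y * x))) :=
  calc exp (-x) * x ^ (y - 1) = exp (-x) * (x ^ (s - 1) * x ^ (y - s)) := by
        rw [← rpow_add hx]; ring_nf
    _ ≤ exp (-x) * (x ^ (s - 1) * (y ^ (y - s) * exp ((y - s) * (x / y - 1)))) := by
        gcongr
        exact rpow_le_rpow_mul_exp hx.le hy (sub_nonneg.mpr hsy)
    _ = y ^ (y - s) * x ^ (s - 1) * exp (-x + (y - s) * (x / y - 1)) := by
        rw [exp_add]; ring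
    _ = y ^ (y - s) * x ^ (s - 1) * exp (s - y + -(s / y * x)) := by
        congr 2; field_simp; ring
    _ = y ^ (y - s) * exp (s - y) * (x ^ (s - 1) * exp (-(s / y * x))) := by
        rw [exp_add]; ring

lemma antitoneOn_Gamma_mul_exp_div_rpow :
    AntitoneOn (fun x : ℝ ↦ Gamma x * (exp x / x ^ x)) (Ioi 0) := by
  intro s (hs : 0 < s) y (hy : 0 < y) hsy
  have hr : 0 < s / y := div_pos hs hy
  have hGamma : Gamma y ≤ y ^ (y - s) * exp (s - y) * ((1 / (s / y)) ^ s * Gamma s) := by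
    have hint : IntegrableOn (fun x ↦ x ^ (s - 1) * exp (-(s / y * x))) (Ioi 0) := by
      simpa using integrableOn_rpow_mul_exp_neg_mul_rpow (p := 1) (by linarith) one_pos hr
    rw [Gamma_eq_integral hy, ← integral_rpow_mul_exp_neg_mul_Ioi hs hr, ← integral_const_mul]
    exact setIntegral_mono_on (GammaIntegral_convergent hy) (hint.const_mul _)
      measurableSet_Ioi fun x hx ↦ exp_neg_mul_rpow_le_mul_rpow_mul_exp hx hy hsy
  calc Gamma y * (exp y / y ^ y)
      ≤ y ^ (y - s) * exp (s - y) * ((1 / (s / y)) ^ s * Gamma s) * (exp y / y ^ y) := by gcongr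
    _ = Gamma s * (exp s / s ^ s) := by
        rw [one_div_div, div_rpow hy.le hs.le, rpow_sub hy, exp_sub]
        field_simp

lemma Gamma_add_one_le_div_sqrt_two_rpow (hp : 2 ≤ p) : Gamma (p + 1) ≤ (p / √2) ^ p := by
  have hp0 : 0 < p := by linarith
  have hGamma : Gamma p * (exp p / p ^ p) ≤ exp 2 / 4 := by
    simpa [Gamma_two, show (2 : ℝ) ^ 2 = 4 by norm_num] using
      antitoneOn_Gamma_mul_exp_div_rpow (mem_Ioi.mpr two_pos) hp0 hp
  have hlin : p / 2 ≤ exp (p / 2 - 1) := by linarith [add_one_le_exp (p / 2 - 1)]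
  have hsqrt : √2 ^ p ≤ 2 * exp (p / 2 - 1) := by
    calc √2 ^ p = 2 * exp (log 2 * (p / 2 - 1)) := by
          rw [sqrt_eq_rpow, ← rpow_mul zero_le_two, exp_mul, exp_log two_pos,
            rpow_sub two_pos, rpow_one]
          ring_nf
      _ ≤ 2 * exp (1 * (p / 2 - 1)) := by
          gcongr
          · linarith
          · linarith [log_two_lt_d9]
      _ = 2 * exp (p / 2 - 1) := by rw [one_mul]
  rw [Gamma_add_one hp0.ne', div_rpow hp0.le (sqrt_nonneg 2), le_div_iff₀ (by positivity)]
  calc p * Gamma p * √2 ^ p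
      = p * (Gamma p * (exp p / p ^ p)) * √2 ^ p * (p ^ p / exp p) := by field_simp
    _ ≤ p * (exp 2 / 4) * (2 * exp (p / 2 - 1)) * (p ^ p / exp p) := by gcongr
    _ = p / 2 * exp 2 * exp (p / 2 - 1) * (p ^ p / exp p) := by ring
    _ ≤ exp (p / 2 - 1) * exp 2 * exp (p / 2 - 1) * (p ^ p / exp p) := by gcongr
    _ = p ^ p := by
        rw [← exp_add, ← exp_add, show p / 2 - 1 + 2 + (p / 2 - 1) = p by ring]
        field_simp

lemma integral_exp_neg_mul_pow (n : ℕ) :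
    ∫ x in Ioi (0 : ℝ), exp (-x) * x ^ n = n.factorial := by
  simpa using ((Gamma_nat_eq_factorial n).symm.trans (Gamma_eq_integral (by positivity))).symm

lemma integrableOn_exp_neg_mul_pow (n : ℕ) :
    IntegrableOn (fun x : ℝ ↦ exp (-x) * x ^ n) (Ioi 0) := by
  simpa using GammaIntegral_convergent (s := n + 1) (by positivity)

lemma integral_exp_neg_mul_sub_sq (t : ℝ) :
    ∫ x in Ioi (0 : ℝ), exp (-x) * (x - t) ^ 2 = t ^ 2 - 2 * t + 2 := by
  have h := integrableOn_exp_neg_mul_pow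
  have hsub : IntegrableOn (fun x ↦ exp (-x) * x ^ 2 - 2 * t * (exp (-x) * x ^ 1)) (Ioi 0) :=
    (h 2).sub ((h 1).const_mul _)
  calc ∫ x in Ioi (0 : ℝ), exp (-x) * (x - t) ^ 2
      = ∫ x in Ioi (0 : ℝ), (exp (-x) * x ^ 2 - 2 * t * (exp (-x) * x ^ 1)
          + t ^ 2 * (exp (-x) * x ^ 0)) := by
        congr with x; ring
    _ = t ^ 2 - 2 * t + 2 := by
        rw [integral_add hsub ((h 0).const_mul _), integral_sub (h 2) ((h 1).const_mul _),
          integral_const_mul, integral_const_mul]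
        simp only [integral_exp_neg_mul_pow, Nat.factorial]
        push_cast
        ring

lemma eqOn_exp_neg_add_mul_abs_rpow :
    EqOn (fun x ↦ exp (-(x + t)) * |x + t - t| ^ s) (fun x ↦ exp (-t) * (exp (-x) * x ^ s))
      (Ioi 0) := by
  intro x (hx : 0 < x)
  simp only [add_sub_cancel_right, abs_of_pos hx, neg_add_rev, exp_add, mul_assoc]

lemma integral_Ioi_self_exp_neg_mul_abs_sub_rpow (hs : -1 < s) (t : ℝ) :
    ∫ x in Ioi t, exp (-x) * |x - t| ^ s = exp (-t) * Gamma (s + 1) := by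
  rw [← (measurePreserving_add_right volume t).setIntegral_preimage_emb
      (measurableEmbedding_addRight t), preimage_add_const_Ioi, sub_self,
    setIntegral_congr_fun measurableSet_Ioi eqOn_exp_neg_add_mul_abs_rpow, integral_const_mul,
    Gamma_eq_integral (by linarith), add_sub_cancel_right]

lemma integrableOn_Ioi_self_exp_neg_mul_abs_sub_rpow (hs : -1 < s) (t : ℝ) :
    IntegrableOn (fun x ↦ exp (-x) * |x - t| ^ s) (Ioi t) := by
  rw [← (measurePreserving_add_right volume t).integrableOn_comp_preimage
      (measurableEmbedding_addRight t), preimage_add_const_Ioi, sub_self]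
  refine IntegrableOn.congr_fun ?_ eqOn_exp_neg_add_mul_abs_rpow.symm measurableSet_Ioi
  simpa [IntegrableOn] using
    (GammaIntegral_convergent (s := s + 1) (by linarith)).const_mul (exp (-t))

lemma integrableOn_Ioi_zero_exp_neg_mul_abs_sub_rpow (hs : 0 ≤ s) (t : ℝ) :
    IntegrableOn (fun x ↦ exp (-x) * |x - t| ^ s) (Ioi 0) := by
  have hcont : Continuous fun x : ℝ ↦ exp (-x) * |x - t| ^ s := by fun_prop (disch := assumption)
  refine (hcont.integrableOn_Icc.union
    (integrableOn_Ioi_self_exp_neg_mul_abs_sub_rpow (by linarith) t)).mono_set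
      (t := Icc 0 t ∪ Ioi t) fun x (hx : 0 < x) ↦ ?_
  exact (le_or_gt x t).imp (fun h ↦ ⟨hx.le, h⟩) id

lemma expMeasure_eq_withDensity_restrict (r : ℝ) :
    expMeasure r = (volume.restrict (Ioi 0)).withDensity
      fun x ↦ ENNReal.ofReal (r * exp (-(r * x))) := by
  rw [restrict_Ioi_eq_restrict_Ici, ← withDensity_indicator measurableSet_Ici]
  refine congrArg volume.withDensity (funext fun x ↦ ?_)
  exact (exponentialPDF_eq r x).trans (by simp [indicator_apply, apply_ite ENNReal.ofReal])

lemma integral_expMeasure (hr : 0 ≤ r) (f : ℝ → E) :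
    ∫ x, f x ∂expMeasure r = ∫ x in Ioi 0, (r * exp (-(r * x))) • f x := by
  rw [expMeasure_eq_withDensity_restrict, integral_withDensity_eq_integral_toReal_smul
    (by fun_prop) (by simp)]
  simp only [ENNReal.toReal_ofReal (mul_nonneg hr (exp_pos _).le)]

lemma integrable_expMeasure_iff (hr : 0 ≤ r) {f : ℝ → E} :
    Integrable f (expMeasure r) ↔ IntegrableOn (fun x ↦ (r * exp (-(r * x))) • f x) (Ioi 0) := by
  rw [expMeasure_eq_withDensity_restrict, integrable_withDensity_iff_integrable_smul'
    (by fun_prop) (by simp), IntegrableOn]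
  simp only [ENNReal.toReal_ofReal (mul_nonneg hr (exp_pos _).le)]

lemma memLp_sub_const_expMeasure_one (hs : 0 < s) (t : ℝ) :
    MemLp (fun x ↦ x - t) (ENNReal.ofReal s) (expMeasure 1) := by
  rw [← integrable_norm_rpow_iff (by fun_prop) (by simpa) ENNReal.ofReal_ne_top,
    integrable_expMeasure_iff zero_le_one]
  simpa [ENNReal.toReal_ofReal hs.le] using integrableOn_Ioi_zero_exp_neg_mul_abs_sub_rpow hs.le t

lemma expShiftNorm_eq_lpNorm (hs : 0 < s) (t : ℝ) :
    expShiftNorm s t = lpNorm (fun x ↦ x - t) (ENNReal.ofReal s) (expMeasure 1) := by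
  rw [lpNorm_eq_integral_norm_rpow_toReal (by simpa) ENNReal.ofReal_ne_top (by fun_prop),
    integral_expMeasure zero_le_one]
  simp [expShiftNorm, ENNReal.toReal_ofReal hs.le]

lemma expShiftNorm_nonneg (s t : ℝ) : 0 ≤ expShiftNorm s t :=
  rpow_nonneg (integral_nonneg fun _ ↦ by positivity) _

lemma expShiftNorm_le_expShiftNorm_of_exponent_le (hr : 0 < r) (hrs : r ≤ s) (t : ℝ) :
    expShiftNorm r t ≤ expShiftNorm s t := by
  have hs : 0 < s := hr.trans_le hrs
  have : IsProbabilityMeasure (expMeasure 1) := isProbabilityMeasure_expMeasure one_pos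
  have hmeas : AEStronglyMeasurable (fun x ↦ x - t) (expMeasure 1) := by fun_prop
  rw [expShiftNorm_eq_lpNorm hr, expShiftNorm_eq_lpNorm hs, ← toReal_eLpNorm hmeas,
    ← toReal_eLpNorm hmeas]
  exact ENNReal.toReal_mono (memLp_sub_const_expMeasure_one hs t).eLpNorm_ne_top
    (eLpNorm_le_eLpNorm_of_exponent_le (ENNReal.ofReal_le_ofReal hrs) hmeas)

lemma expShiftNorm_two (t : ℝ) : expShiftNorm 2 t = √(t ^ 2 - 2 * t + 2) := by
  simp only [expShiftNorm, rpow_two, sq_abs, integral_exp_neg_mul_sub_sq, sqrt_eq_rpow]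

lemma div_sqrt_two_le_expShiftNorm (hq : 2 ≤ q) (t : ℝ) : t / √2 ≤ expShiftNorm q t :=
  calc t / √2 ≤ √(t ^ 2 - 2 * t + 2) := by
        refine le_sqrt_of_sq_le ?_
        rw [div_pow, sq_sqrt zero_le_two]
        linarith [sq_nonneg (t - 2)]
    _ = expShiftNorm 2 t := (expShiftNorm_two t).symm
    _ ≤ expShiftNorm q t := expShiftNorm_le_expShiftNorm_of_exponent_le two_pos hq t

lemma integral_Ioc_exp_neg_mul_abs_sub_rpow_le (hs : 0 ≤ s) (ht : 0 ≤ t) :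
    ∫ x in Ioc 0 t, exp (-x) * |x - t| ^ s ≤ (1 - exp (-t)) * t ^ s := by
  have hexp : ∫ x in Ioc 0 t, exp (-x) = 1 - exp (-t) := by
    rw [← intervalIntegral.integral_of_le ht, intervalIntegral.integral_comp_neg,
      integral_exp, neg_zero, exp_zero]
  rw [← hexp, ← integral_mul_const]
  refine setIntegral_mono_on ?_ ?_ measurableSet_Ioc fun x hx ↦ ?_
  · exact (integrableOn_Ioi_zero_exp_neg_mul_abs_sub_rpow hs t).mono_set Ioc_subset_Ioi_self
  · exact ((integrableOn_exp_neg_Ioi 0).mono_set Ioc_subset_Ioi_self).mul_const _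
  · have habs : |x - t| ≤ t := abs_le.mpr ⟨by linarith [hx.1], by linarith [hx.2]⟩
    gcongr

lemma integral_Ioi_zero_exp_neg_mul_abs_sub_rpow_le (hs : 0 ≤ s) (ht : 0 ≤ t) :
    ∫ x in Ioi 0, exp (-x) * |x - t| ^ s ≤
      (1 - exp (-t)) * t ^ s + exp (-t) * Gamma (s + 1) := by
  have hint := integrableOn_Ioi_zero_exp_neg_mul_abs_sub_rpow hs t
  rw [← Ioc_union_Ioi_eq_Ioi ht, setIntegral_union (Ioc_disjoint_Ioi le_rfl) measurableSet_Ioi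
    (hint.mono_set Ioc_subset_Ioi_self) (hint.mono_set (Ioi_subset_Ioi ht)),
    integral_Ioi_self_exp_neg_mul_abs_sub_rpow (by linarith)]
  gcongr
  exact integral_Ioc_exp_neg_mul_abs_sub_rpow_le hs ht

lemma expShiftNorm_le_max (hp : 2 ≤ p) (ht : 0 ≤ t) : expShiftNorm p t ≤ max t (p / √2) := by
  set M := max t (p / √2)
  have hp0 : 0 < p := by linarith
  have hM : 0 ≤ M := ht.trans (le_max_left _ _)
  have hexp : 0 ≤ 1 - exp (-t) := sub_nonneg.mpr (exp_le_one_iff.mpr (neg_nonpos.mpr ht))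
  have htM : t ^ p ≤ M ^ p := by gcongr; exact le_max_left _ _
  have hGamma : Gamma (p + 1) ≤ M ^ p :=
    (Gamma_add_one_le_div_sqrt_two_rpow hp).trans (by gcongr; exact le_max_right _ _)
  have hint : ∫ x in Ioi 0, exp (-x) * |x - t| ^ p ≤ M ^ p :=
    calc ∫ x in Ioi 0, exp (-x) * |x - t| ^ p
        ≤ (1 - exp (-t)) * t ^ p + exp (-t) * Gamma (p + 1) :=
          integral_Ioi_zero_exp_neg_mul_abs_sub_rpow_le hp0.le ht
      _ ≤ (1 - exp (-t)) * M ^ p + exp (-t) * M ^ p := by gcongr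
      _ = M ^ p := by ring
  rw [expShiftNorm, one_div]
  exact (rpow_inv_le_iff_of_pos (integral_nonneg fun _ ↦ by positivity) hM hp0).mpr hint

lemma expShiftNorm_le_max_mul_expShiftNorm (hp : 2 ≤ p) (hq : 2 ≤ q) (ht : 0 < t) :
    expShiftNorm p t ≤ max (√2) (p / t) * expShiftNorm q t :=
  calc expShiftNorm p t ≤ max t (p / √2) := expShiftNorm_le_max hp ht.le
    _ = max (√2) (p / t) * (t / √2) := by
        rw [max_mul_of_nonneg _ _ (by positivity)]
        congr 1 <;> field_simp
    _ ≤ max (√2) (p / t) * expShiftNorm q t := by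
        gcongr
        exact div_sqrt_two_le_expShiftNorm hq t

theorem expShiftNorm_le_of_large_t_general {C : ℝ} (hC : 1 ≤ C) (hp : 2 ≤ p) (hq : 2 ≤ q)
    (ht : q ≤ t) (hratio : √2 / C ≤ p / q) :
    expShiftNorm p t ≤ C * (p / q) * expShiftNorm q t := by
  have hsqrt : √2 ≤ C * (p / q) := (div_le_iff₀' (one_pos.trans_le hC)).mp hratio
  have hpt : p / t ≤ C * (p / q) :=
    calc p / t ≤ p / q := by gcongr
      _ ≤ C * (p / q) := le_mul_of_one_le_left (by positivity) hC
  calc expShiftNorm p t ≤ max (√2) (p / t) * expShiftNorm q t :=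
        expShiftNorm_le_max_mul_expShiftNorm hp hq (by linarith)
    _ ≤ C * (p / q) * expShiftNorm q t :=
        mul_le_mul_of_nonneg_right (max_le hsqrt hpt) (expShiftNorm_nonneg q t)

end

/-- If `X` is exponential with parameter 1, `p ≥ q ≥ 2`, `t ≥ q` and
`p/q ≥ √2 / C₀` with `C₀ = e^{W(1/e)}`, then
`‖X - t‖_p ≤ C₀ (p/q) ‖X - t‖_q`. -/
theorem expShiftNorm_le_of_large_t
    (w : ℝ) (hw : 0 < w) (hwe : w * Real.exp w = Real.exp (-1))
    (p q t : ℝ) (hq : 2 ≤ q) (hqp : q ≤ p) (ht : q ≤ t)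
    (hratio : Real.sqrt 2 / Real.exp w ≤ p / q) :
    expShiftNorm p t ≤ Real.exp w * (p / q) * expShiftNorm q t :=
  expShiftNorm_le_of_large_t_general (Real.one_le_exp hw.le) (hq.trans hqp) hq ht hratio
end
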